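/- Suppose that X is a separable metric space and φ : ℕ^ℕ → X is Baire measurable. Then there is a ∧-embedding π : ℕ^{<ℕ} → ℕ^{<ℕ} such that φ ∘ π̂ : ℕ^ℕ → X is constant, or φ ∘ π̂ is an injective continuous closed map from ℕ^ℕ into X, or φ ∘ π̂ extends to an injective continuous closed map from ℕ^ℕ_* into X. -/

import Mathlib

open Set Topology TopologicalSpace
open scoped ENNReal

/-- `t` is an initial segment of `b : ℕ → ℕ`. -/
def PrefixFun (t : List ℕ) (b : ℕ → ℕ) : Prop :=
  ∀ (i : ℕ) (h : i < t.length), t.get ⟨i, h⟩ = b i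

/-- The meet `s ∧ t`: the longest common initial segment of two finite sequences. -/
def listMeet : List ℕ → List ℕ → List ℕ
  | a :: s, b :: t => if a = b then a :: listMeet s t else []
  | _, _ => []

/-- A `∧`-embedding: an injection preserving meets. -/
def MeetEmbedding (π : List ℕ → List ℕ) : Prop :=
  Function.Injective π ∧ ∀ s t, π (listMeet s t) = listMeet (π s) (π t)

/-- The induced map on Baire space: `limSeq π b = ⋃ i, π (b ↾ i)`. -/
def limSeq (π : List ℕ → List ℕ) (b : ℕ → ℕ) : ℕ → ℕ := fun n =>
  (π (List.ofFn fun i : Fin (n + 1) => b i)).getD n 0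

/-- Points of the space `ℕ^{≤ℕ}_*`: finite sequences, infinite sequences, and
finite sequences followed by `∞`. -/
inductive NStar : Type
  | fin : List ℕ → NStar
  | inf : (ℕ → ℕ) → NStar
  | lim : List ℕ → NStar

namespace NStar

/-- `t ⊑ c`. -/
def PrefixOf (t : List ℕ) : NStar → Prop
  | fin s => t <+: s
  | inf b => PrefixFun t b
  | lim s => t <+: s

/-- The basic "cylinder" `N_t = {c | t ⊑ c}`. -/
def cyl (t : List ℕ) : Set NStar := {c | PrefixOf t c}

/-- The smallest topology in which every `{t}` and every `N_t` is clopen. -/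
instance : TopologicalSpace NStar :=
  TopologicalSpace.generateFrom
    {S | ∃ t : List ℕ, S = {fin t} ∨ S = ({fin t} : Set NStar)ᶜ ∨ S = cyl t ∨ S = (cyl t)ᶜ}

def IsFin (c : NStar) : Prop := ∃ t, c = fin t
def IsInf (c : NStar) : Prop := ∃ b, c = inf b
def IsLim (c : NStar) : Prop := ∃ t, c = lim t

/-- The extension of `π : ℕ^{<ℕ} → ℕ^{<ℕ}` to `ℕ^{≤ℕ}_*`. -/
def hat (π : List ℕ → List ℕ) : NStar → NStar
  | fin t => fin (π t)
  | inf b => inf (limSeq π b)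
  | lim t => lim (π t)

end NStar

/-- `ℕ^ℕ_* = ℕ^{≤ℕ}_* ∖ ℕ^{<ℕ}`. -/
abbrev NNStar : Type := {c : NStar // ¬ c.IsFin}
/-- `ℕ^ℕ_* ∖ ℕ^ℕ = {t⌢⟨∞⟩ : t ∈ ℕ^{<ℕ}}`. -/
abbrev NLim : Type := {c : NStar // c.IsLim}
/-- The copy of `ℕ^{<ℕ}` inside `ℕ^{≤ℕ}_*` (a discrete subspace). -/
abbrev NFin : Type := {c : NStar // c.IsFin}
/-- `ℕ^{≤ℕ} = ℕ^{<ℕ} ∪ ℕ^ℕ`. -/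
abbrev NFinInf : Type := {c : NStar // ¬ c.IsLim}
/-- `ℕ^{≤ℕ}_* ∖ ℕ^ℕ`. -/
abbrev NFinLim : Type := {c : NStar // ¬ c.IsInf}

def infPt (b : ℕ → ℕ) : NNStar :=
  ⟨NStar.inf b, by rintro ⟨t, h⟩; exact NStar.noConfusion h⟩

def limPt (t : List ℕ) : NLim := ⟨NStar.lim t, t, rfl⟩

def finPt (t : List ℕ) : NFin := ⟨NStar.fin t, t, rfl⟩

/-- The extension `π̂` restricted to `ℕ^ℕ_*`. -/
def hatNN (π : List ℕ → List ℕ) (c : NNStar) : NNStar :=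
  ⟨c.1.hat π, by
    obtain ⟨c, hc⟩ := c
    cases c with
    | fin t => exact fun _ => hc ⟨t, rfl⟩
    | inf b => rintro ⟨t, h⟩; exact NStar.noConfusion h
    | lim t => rintro ⟨s, h⟩; exact NStar.noConfusion h⟩

/-- The extension `π̂` restricted to `ℕ^ℕ_* ∖ ℕ^ℕ`. -/
def hatLim (π : List ℕ → List ℕ) (c : NLim) : NLim :=
  ⟨c.1.hat π, by obtain ⟨c, t, rfl⟩ := c; exact ⟨π t, rfl⟩⟩

def NLim.toNN (c : NLim) : NNStar :=
  ⟨c.1, by obtain ⟨c, t, rfl⟩ := c; rintro ⟨s, h⟩; exact NStar.noConfusion h⟩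

def NLim.base (c : NLim) : List ℕ :=
  match c.1 with
  | .lim t => t
  | .fin t => t
  | .inf _ => []

/-- The map `p : t⌢⟨∞⟩ ↦ t`, with values in the discrete copy of `ℕ^{<ℕ}`. -/
def pFin (c : NLim) : NFin := finPt c.base

def NFin.toFinLim (c : NFin) : NFinLim :=
  ⟨c.1, by obtain ⟨c, t, rfl⟩ := c; rintro ⟨b, h⟩; exact NStar.noConfusion h⟩

def NFin.toFinInf (c : NFin) : NFinInf :=
  ⟨c.1, by obtain ⟨c, t, rfl⟩ := c; rintro ⟨s, h⟩; exact NStar.noConfusion h⟩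

/-- A closed continuous embedding of `φ` into `φ'`: a pair of injective continuous closed
maps `πX : X → X'` and `πY : cl(φ[X]) → cl(φ'[X'])` with `φ' ∘ πX = πY ∘ φ`. -/
def ClosedContinuousEmbedding {X Y X' Y' : Type*} [TopologicalSpace X] [TopologicalSpace Y]
    [TopologicalSpace X'] [TopologicalSpace Y'] (φ : X → Y) (φ' : X' → Y') : Prop :=
  ∃ (πX : X → X') (πY : closure (Set.range φ) → closure (Set.range φ')),
    Continuous πX ∧ Function.Injective πX ∧ IsClosedMap πX ∧
    Continuous πY ∧ Function.Injective πY ∧ IsClosedMap πY ∧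
    ∀ x : X, φ' (πX x) = (πY ⟨φ x, subset_closure ⟨x, rfl⟩⟩ : Y')

/-- A topological space is analytic if it is a continuous image of a closed subset of `ℕ^ℕ`. -/
def IsAnalytic (X : Type*) [TopologicalSpace X] : Prop :=
  ∃ C : Set (ℕ → ℕ), IsClosed C ∧ ∃ f : C → X, Continuous f ∧ Function.Surjective f

/-- Baire measurable: preimages of open sets have the Baire property. -/
def BaireMeasurableFun {X Y : Type*} [TopologicalSpace X] [TopologicalSpace Y]
    (φ : X → Y) : Prop :=
  ∀ V : Set Y, IsOpen V → ∃ U : Set X, IsOpen U ∧ IsMeagre (symmDiff (φ ⁻¹' V) U)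

/-- Baire class one: preimages of open sets are `Fσ`. -/
def BaireClassOneFun {X Y : Type*} [TopologicalSpace X] [TopologicalSpace Y]
    (φ : X → Y) : Prop :=
  ∀ V : Set Y, IsOpen V → ∃ F : ℕ → Set X, (∀ n, IsClosed (F n)) ∧ φ ⁻¹' V = ⋃ n, F n

/-- σ-continuous with closed witnesses. -/
def SigmaContClosed {X Y : Type*} [TopologicalSpace X] [TopologicalSpace Y]
    (φ : X → Y) : Prop :=
  ∃ F : ℕ → Set X, (∀ n, IsClosed (F n)) ∧ (⋃ n, F n) = Set.univ ∧ ∀ n, ContinuousOn φ (F n)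

/-- Borel: preimages of open sets are Borel. -/
def BorelFun {X Y : Type*} [TopologicalSpace X] [TopologicalSpace Y] (φ : X → Y) : Prop :=
  ∀ V : Set Y, IsOpen V → @MeasurableSet X (borel X) (φ ⁻¹' V)

/-- The function on `ℕ^ℕ_*` agreeing with `f` on `ℕ^ℕ` and with `g` on `ℕ^ℕ_* ∖ ℕ^ℕ`,
with values in the topological disjoint union. -/
def combine2 {A B : Type*} (f : (ℕ → ℕ) → A) (g : NLim → B) : NNStar → A ⊕ B := fun c =>
  match c with
  | ⟨.fin t, h⟩ => absurd ⟨t, rfl⟩ h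
  | ⟨.inf b, _⟩ => Sum.inl (f b)
  | ⟨.lim t, _⟩ => Sum.inr (g (limPt t))

/-! ### Combinatorics of finite sequences -/

/-- The initial segment of `b` of length `n`. -/
def resSeq (b : ℕ → ℕ) (n : ℕ) : List ℕ := List.ofFn fun i : Fin n => b i

/-- The cylinder of Baire space given by a finite sequence. -/
def bcyl (t : List ℕ) : Set (ℕ → ℕ) := {b | PrefixFun t b}

lemma resSeq_length (b : ℕ → ℕ) (n : ℕ) : (resSeq b n).length = n := by
  simp [resSeq]

lemma resSeq_succ (b : ℕ → ℕ) (n : ℕ) : resSeq b (n + 1) = resSeq b n ++ [b n] := by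
  unfold resSeq
  rw [List.ofFn_succ_last]
  rfl

lemma prefixFun_resSeq (b : ℕ → ℕ) (n : ℕ) : PrefixFun (resSeq b n) b := by
  intro i hi
  simp [resSeq]

lemma prefixFun_iff (s : List ℕ) (b : ℕ → ℕ) : PrefixFun s b ↔ resSeq b s.length = s := by
  constructor
  · intro h
    apply List.ext_getElem
    · simp [resSeq]
    · intro i h1 h2
      have := h i h2
      simp only [List.get_eq_getElem] at this
      simp [resSeq, this]
  · intro h
    rw [← h]
    exact prefixFun_resSeq _ _

lemma PrefixFun.mono {s t : List ℕ} {b : ℕ → ℕ} (hst : s <+: t) (h : PrefixFun t b) :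
    PrefixFun s b := by
  obtain ⟨u, rfl⟩ := hst
  intro i hi
  have := h i (by simp; omega)
  simp only [List.get_eq_getElem] at this ⊢
  rw [← this, List.getElem_append_left]

lemma resSeq_isPre (b : ℕ → ℕ) {m n : ℕ} (h : m ≤ n) : resSeq b m <+: resSeq b n := by
  induction n, h using Nat.le_induction with
  | base => exact List.prefix_rfl
  | succ n _ ih => rw [resSeq_succ]; exact ih.trans (List.prefix_append _ _)

lemma PrefixFun.isPre {s t : List ℕ} {b : ℕ → ℕ} (hs : PrefixFun s b) (ht : PrefixFun t b)
    (h : s.length ≤ t.length) : s <+: t := by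
  rw [prefixFun_iff] at hs ht
  rw [← hs, ← ht]
  exact resSeq_isPre b h

lemma bcyl_mono {s t : List ℕ} (hst : s <+: t) : bcyl t ⊆ bcyl s := fun _ hb => hb.mono hst

lemma bcyl_nonempty (s : List ℕ) : (bcyl s).Nonempty := by
  refine ⟨fun i => s.getD i 0, ?_⟩
  intro i hi
  simp [hi]

lemma prefixFun_next {s : List ℕ} {b : ℕ → ℕ} (h : PrefixFun s b) :
    PrefixFun (s ++ [b s.length]) b := by
  rw [prefixFun_iff] at h ⊢
  simp only [List.length_append, List.length_singleton]
  rw [resSeq_succ, h]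

lemma eq_of_prefixFun {a b : ℕ → ℕ} (h : ∀ n, ∃ t : List ℕ, n ≤ t.length ∧ PrefixFun t a ∧
    PrefixFun t b) : a = b := by
  funext n
  obtain ⟨t, hn, ha, hb⟩ := h (n + 1)
  rw [← ha n hn, ← hb n hn]

lemma list_split (t t' : List ℕ) (h : t ≠ t') :
    (∃ s i j, i ≠ j ∧ s ++ [i] <+: t ∧ s ++ [j] <+: t') ∨ (∃ i, t ++ [i] <+: t') ∨
      (∃ i, t' ++ [i] <+: t) := by
  induction t generalizing t' with
  | nil =>
    cases t' with
    | nil => exact absurd rfl h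
    | cons a t' => exact Or.inr (Or.inl ⟨a, by simp⟩)
  | cons a t ih =>
    cases t' with
    | nil => exact Or.inr (Or.inr ⟨a, by simp⟩)
    | cons a' t' =>
      by_cases haa : a = a'
      · subst haa
        rcases ih t' (by rintro rfl; exact h rfl) with ⟨s, i, j, hij, h1, h2⟩ | ⟨i, hi⟩ | ⟨i, hi⟩
        · exact Or.inl ⟨a :: s, i, j, hij, by simpa using h1, by simpa using h2⟩
        · exact Or.inr (Or.inl ⟨i, by simpa using hi⟩)
        · exact Or.inr (Or.inr ⟨i, by simpa using hi⟩)
      · exact Or.inl ⟨[], a, a', haa, by simp, by simp⟩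

lemma listMeet_self_append (s u : List ℕ) : listMeet s (s ++ u) = s := by
  induction s with
  | nil => cases u <;> simp [listMeet]
  | cons a s ih => simp [listMeet, ih]

lemma listMeet_append_self (s u : List ℕ) : listMeet (s ++ u) s = s := by
  induction s with
  | nil => cases u <;> simp [listMeet]
  | cons a s ih => simp [listMeet, ih]

lemma listMeet_left {s t : List ℕ} (h : s <+: t) : listMeet s t = s := by
  obtain ⟨u, rfl⟩ := h
  exact listMeet_self_append s u

lemma listMeet_right {s t : List ℕ} (h : s <+: t) : listMeet t s = s := by
  obtain ⟨u, rfl⟩ := h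
  exact listMeet_append_self s u

lemma listMeet_split {s t t' : List ℕ} {i j : ℕ} (hij : i ≠ j) (h : s ++ [i] <+: t)
    (h' : s ++ [j] <+: t') : listMeet t t' = s := by
  obtain ⟨u, rfl⟩ := h
  obtain ⟨v, rfl⟩ := h'
  induction s with
  | nil => simp [listMeet, hij]
  | cons a s ih => simpa [listMeet] using ih

lemma listMeet_prefix_right (s t : List ℕ) : listMeet s t <+: t := by
  by_cases h : s = t
  · subst h; rw [listMeet_left List.prefix_rfl]
  · rcases list_split s t h with ⟨u, i, j, hij, h1, h2⟩ | ⟨i, hi⟩ | ⟨i, hi⟩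
    · rw [listMeet_split hij h1 h2]; exact (List.prefix_append _ _).trans h2
    · have := (List.prefix_append _ _).trans hi
      rw [listMeet_left this]; exact this
    · rw [listMeet_right ((List.prefix_append _ _).trans hi)]

lemma MeetEmbedding.mono {π : List ℕ → List ℕ} (hπ : MeetEmbedding π) {s t : List ℕ}
    (h : s <+: t) : π s <+: π t := by
  have := hπ.2 s t
  rw [listMeet_left h] at this
  rw [this]
  exact listMeet_prefix_right _ _

lemma MeetEmbedding.length_le {π : List ℕ → List ℕ} (hπ : MeetEmbedding π) (s : List ℕ) :
    s.length ≤ (π s).length := by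
  induction s using List.reverseRecOn with
  | nil => simp
  | append_singleton s i ih =>
    have h1 := hπ.mono (List.prefix_append s [i])
    have h2 : (π s).length ≠ (π (s ++ [i])).length := by
      intro h
      have := hπ.1 (h1.eq_of_length h)
      simp at this
    have h3 := h1.length_le
    simp only [List.length_append, List.length_singleton]
    omega

lemma MeetEmbedding.prefixFun {π : List ℕ → List ℕ} (hπ : MeetEmbedding π) (b : ℕ → ℕ) (n : ℕ) :
    PrefixFun (π (resSeq b n)) (limSeq π b) := by
  intro i hi
  have hl := hπ.length_le (resSeq b (i + 1))
  rw [resSeq_length] at hl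
  have e : limSeq π b i = (π (resSeq b (i + 1)))[i] := by
    change (π (resSeq b (i + 1))).getD i 0 = _
    rw [List.getD_eq_getElem]
  rw [e, List.get_eq_getElem]
  rcases le_total n (i + 1) with h | h
  · exact (hπ.mono (resSeq_isPre b h)).getElem hi
  · exact ((hπ.mono (resSeq_isPre b h)).getElem _).symm

lemma MeetEmbedding.prefixFun' {π : List ℕ → List ℕ} (hπ : MeetEmbedding π) {b : ℕ → ℕ}
    {t : List ℕ} (h : PrefixFun t b) : PrefixFun (π t) (limSeq π b) := by
  rw [prefixFun_iff] at h
  rw [← h]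
  exact hπ.prefixFun b _

lemma MeetEmbedding.comp {π ρ : List ℕ → List ℕ} (hπ : MeetEmbedding π) (hρ : MeetEmbedding ρ) :
    MeetEmbedding (π ∘ ρ) :=
  ⟨hπ.1.comp hρ.1, fun s t => by simp [hρ.2, hπ.2]⟩

lemma limSeq_comp {π ρ : List ℕ → List ℕ} (hπ : MeetEmbedding π) (hρ : MeetEmbedding ρ)
    (b : ℕ → ℕ) : limSeq (π ∘ ρ) b = limSeq π (limSeq ρ b) := by
  apply eq_of_prefixFun
  intro n
  refine ⟨π (ρ (resSeq b n)), ?_, (hπ.comp hρ).prefixFun b n,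
    hπ.prefixFun' (hρ.prefixFun b n)⟩
  have := (hπ.comp hρ).length_le (resSeq b n)
  rwa [resSeq_length] at this

lemma continuous_limSeq (π : List ℕ → List ℕ) : Continuous (limSeq π) := by
  refine continuous_pi fun n => ?_
  have h1 : Continuous fun f : Fin (n + 1) → ℕ => (π (List.ofFn f)).getD n 0 :=
    continuous_of_discreteTopology
  have h2 : Continuous fun (b : ℕ → ℕ) (i : Fin (n + 1)) => b i := by fun_prop
  exact h1.comp h2

/-- Building a `∧`-embedding by recursion. -/
def treeMap (root : List ℕ) (step : List ℕ → ℕ → List ℕ) (t : List ℕ) : List ℕ :=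
  t.foldl step root

lemma treeMap_snoc (root : List ℕ) (step : List ℕ → ℕ → List ℕ) (t : List ℕ) (i : ℕ) :
    treeMap root step (t ++ [i]) = step (treeMap root step t) i := by
  simp [treeMap]

lemma treeMap_good {root : List ℕ} {step : List ℕ → ℕ → List ℕ} {P : List ℕ → Prop}
    (h0 : P root) (hs : ∀ s, P s → ∀ i, P (step s i)) (t : List ℕ) :
    P (treeMap root step t) := by
  induction t using List.reverseRecOn with
  | nil => exact h0
  | append_singleton s i ih => rw [treeMap_snoc]; exact hs _ ih i

lemma treeMap_meet {root : List ℕ} {step : List ℕ → ℕ → List ℕ} {P : List ℕ → Prop}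
    {nx : List ℕ → ℕ → ℕ}
    (h0 : P root) (hs : ∀ s, P s → ∀ i, P (step s i))
    (hn : ∀ s, P s → Function.Injective (nx s))
    (hx : ∀ s, P s → ∀ i, s ++ [nx s i] <+: step s i) :
    MeetEmbedding (treeMap root step) := by
  have hP := treeMap_good h0 hs
  set π := treeMap root step with hπ
  have hstep : ∀ t i, π t ++ [nx (π t) i] <+: π (t ++ [i]) := by
    intro t i
    rw [hπ, treeMap_snoc]
    exact hx _ (hP t) i
  have mono1 : ∀ t i, π t <+: π (t ++ [i]) := fun t i =>
    (List.prefix_append _ _).trans (hstep t i)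
  have mono : ∀ s t, s <+: t → π s <+: π t := by
    rintro s t ⟨u, rfl⟩
    induction u using List.reverseRecOn with
    | nil => simp
    | append_singleton u i ih =>
      rw [← List.append_assoc]
      exact ih.trans (mono1 _ i)
  have hlt : ∀ t i t', t ++ [i] <+: t' → (π t).length < (π t').length := by
    intro t i t' h
    have := ((hstep t i).trans (mono _ _ h)).length_le
    simp at this
    omega
  refine ⟨?_, ?_⟩
  · intro t t' h
    by_contra hne
    rcases list_split t t' hne with ⟨s, i, j, hij, h1, h2⟩ | ⟨i, hi⟩ | ⟨i, hi⟩
    · have e := listMeet_split (fun e => hij (hn _ (hP s) e)) ((hstep s i).trans (mono _ _ h1))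
        ((hstep s j).trans (mono _ _ h2))
      rw [h, listMeet_left List.prefix_rfl, ← h] at e
      exact absurd (congrArg List.length e) (hlt _ _ _ h1).ne'
    · have := hlt _ _ _ hi
      rw [h] at this
      omega
    · have := hlt _ _ _ hi
      rw [h] at this
      omega
  · intro t t'
    by_cases hne : t = t'
    · subst hne
      rw [listMeet_left List.prefix_rfl, listMeet_left List.prefix_rfl]
    rcases list_split t t' hne with ⟨s, i, j, hij, h1, h2⟩ | ⟨i, hi⟩ | ⟨i, hi⟩
    · rw [listMeet_split hij h1 h2,
        listMeet_split (fun e => hij (hn _ (hP s) e)) ((hstep s i).trans (mono _ _ h1))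
        ((hstep s j).trans (mono _ _ h2))]
    · have := (List.prefix_append _ _).trans hi
      rw [listMeet_left this, listMeet_left (mono _ _ this)]
    · have := (List.prefix_append _ _).trans hi
      rw [listMeet_right this, listMeet_right (mono _ _ this)]

/-! ### Topology of cylinders -/

lemma isOpen_bcyl (t : List ℕ) : IsOpen (bcyl t) := by
  have : bcyl t = ⋂ i : Fin t.length, (fun b : ℕ → ℕ => b i) ⁻¹' {t.get i} := by
    ext b
    simp only [bcyl, PrefixFun, mem_ofPred_eq, mem_iInter, mem_preimage, mem_singleton_iff]
    exact ⟨fun h i => (h i i.2).symm, fun h i hi => (h ⟨i, hi⟩).symm⟩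
  rw [this]
  exact isOpen_iInter_of_finite fun i => (isOpen_discrete _).preimage (continuous_apply _)

lemma exists_resSeq_subset {U : Set (ℕ → ℕ)} {b : ℕ → ℕ} (hU : U ∈ 𝓝 b) :
    ∃ n, bcyl (resSeq b n) ⊆ U := by
  obtain ⟨V, ⟨x, n, rfl⟩, hb, hV⟩ :=
    (PiNat.isTopologicalBasis_cylinders (fun _ : ℕ => ℕ)).mem_nhds_iff.1 hU
  refine ⟨n, fun c hc => hV ?_⟩
  intro i hi
  have h1 := hc i (by rw [resSeq_length]; exact hi)
  rw [← hb i hi, ← h1]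
  simp [resSeq]

/-- Inside an open set meeting a cylinder, a smaller cylinder. -/
lemma exists_ext_subset {U : Set (ℕ → ℕ)} (hU : IsOpen U) {s : List ℕ} {b : ℕ → ℕ}
    (hb : b ∈ bcyl s) (hbU : b ∈ U) : ∃ u, s <+: u ∧ b ∈ bcyl u ∧ bcyl u ⊆ U := by
  obtain ⟨n, hn⟩ := exists_resSeq_subset (hU.mem_nhds hbU)
  refine ⟨resSeq b (max n s.length), ?_, prefixFun_resSeq _ _, ?_⟩
  · exact PrefixFun.isPre hb (prefixFun_resSeq _ _) (by rw [resSeq_length]; exact le_max_right _ _)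
  · exact (bcyl_mono (resSeq_isPre b (le_max_left _ _))).trans hn

lemma ultra_dichotomy {Y : Type*} (f : Ultrafilter Y) (C : List ℕ → Set Y) (h0 : C [] ∈ f) :
    (∃ t, C t ∈ f ∧ ∀ i, C (t ++ [i]) ∉ f) ∨ ∃ b : ℕ → ℕ, ∀ n, C (resSeq b n) ∈ f := by
  by_cases h : ∃ t, C t ∈ f ∧ ∀ i, C (t ++ [i]) ∉ f
  · exact Or.inl h
  right
  push Not at h
  choose! g hg using h
  let S : ℕ → List ℕ := fun n => Nat.rec [] (fun _ t => t ++ [g t]) n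
  have hS : ∀ n, C (S n) ∈ f := by
    intro n
    induction n with
    | zero => exact h0
    | succ n ih => exact hg _ ih
  refine ⟨fun n => g (S n), fun n => ?_⟩
  have : resSeq (fun n => g (S n)) n = S n := by
    induction n with
    | zero => simp [resSeq, S]
    | succ n ih => rw [resSeq_succ, ih]
  rw [this]
  exact hS n

/-! ### The space `ℕ^ℕ_*` -/

lemma isOpen_cyl (t : List ℕ) : IsOpen (NStar.cyl t) :=
  TopologicalSpace.isOpen_generateFrom_of_mem ⟨t, Or.inr (Or.inr (Or.inl rfl))⟩

lemma isOpen_cyl_compl (t : List ℕ) : IsOpen (NStar.cyl t)ᶜ :=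
  TopologicalSpace.isOpen_generateFrom_of_mem ⟨t, Or.inr (Or.inr (Or.inr rfl))⟩

lemma cyl_mono {s t : List ℕ} (h : s <+: t) : NStar.cyl t ⊆ NStar.cyl s := by
  intro c hc
  cases c with
  | fin u => exact h.trans hc
  | inf b => exact PrefixFun.mono h hc
  | lim u => exact h.trans hc

lemma cyl_inter {s t : List ℕ} {c : NStar} (hs : c ∈ NStar.cyl s) (ht : c ∈ NStar.cyl t)
    (h : s.length ≤ t.length) : s <+: t := by
  cases c with
  | fin u => exact List.prefix_of_prefix_length_le hs ht h
  | inf b => exact PrefixFun.isPre hs ht h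
  | lim u => exact List.prefix_of_prefix_length_le hs ht h

lemma ultra_le_nhds (f : Ultrafilter NNStar) (c : NNStar)
    (h1 : ∀ t, c.1 ∈ NStar.cyl t → (Subtype.val ⁻¹' NStar.cyl t : Set NNStar) ∈ f)
    (h2 : ∀ t, c.1 ∉ NStar.cyl t → (Subtype.val ⁻¹' (NStar.cyl t)ᶜ : Set NNStar) ∈ f) :
    (f : Filter NNStar) ≤ 𝓝 c := by
  rw [nhds_subtype_eq_comap, ← Filter.map_le_iff_le_comap, TopologicalSpace.nhds_generateFrom]
  refine le_iInf₂ fun S hS => ?_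
  obtain ⟨hc, t, h | h | h | h⟩ := hS
  · subst h; exact absurd ⟨t, hc⟩ c.2
  · subst h
    rw [Filter.le_principal_iff, Filter.mem_map]
    convert Filter.univ_mem
    ext x
    simp only [mem_preimage, mem_compl_iff, mem_singleton_iff, mem_univ, iff_true]
    exact fun h => x.2 ⟨t, h⟩
  · subst h
    rw [Filter.le_principal_iff, Filter.mem_map]
    exact h1 t hc
  · subst h
    rw [Filter.le_principal_iff, Filter.mem_map]
    exact h2 t hc

/-- The point `t⌢∞` of `ℕ^ℕ_*`. -/
def limNN (t : List ℕ) : NNStar := ⟨NStar.lim t, by rintro ⟨s, h⟩; exact NStar.noConfusion h⟩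

lemma nnstar_cases (c : NNStar) : (∃ b, c = infPt b) ∨ ∃ t, c = limNN t := by
  obtain ⟨c, hc⟩ := c
  cases c with
  | fin u => exact absurd ⟨u, rfl⟩ hc
  | inf b => exact Or.inl ⟨b, rfl⟩
  | lim t => exact Or.inr ⟨t, rfl⟩

instance nnstarCompact : CompactSpace NNStar := by
  refine ⟨isCompact_iff_ultrafilter_le_nhds.2 fun f _ => ?_⟩
  have h0 : (Subtype.val ⁻¹' NStar.cyl [] : Set NNStar) ∈ f := by
    have e : (Subtype.val ⁻¹' NStar.cyl [] : Set NNStar) = univ := by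
      refine eq_univ_of_forall fun x => ?_
      obtain ⟨b, rfl⟩ | ⟨t, rfl⟩ := nnstar_cases x
      · intro i hi
        simp at hi
      · exact List.nil_prefix
    rw [e]
    exact Filter.univ_mem
  rcases ultra_dichotomy f (fun t => Subtype.val ⁻¹' NStar.cyl t) h0 with ⟨t, ht, hti⟩ | ⟨b, hb⟩
  · refine ⟨limNN t, mem_univ _, ultra_le_nhds f _ ?_ ?_⟩
    · intro s hs
      exact Filter.mem_of_superset ht (preimage_mono (cyl_mono hs))
    · intro s hs
      have hs' : ¬ s <+: t := hs
      by_cases hts : ∃ i, t ++ [i] <+: s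
      · obtain ⟨i, hi⟩ := hts
        have := Ultrafilter.compl_mem_iff_notMem.2 (hti i)
        refine Filter.mem_of_superset this ?_
        intro c hc hcs
        exact hc (cyl_mono hi hcs)
      · refine Filter.mem_of_superset ht ?_
        intro c hc hcs
        rcases le_total s.length t.length with hl | hl
        · exact hs' (cyl_inter hcs hc hl)
        · obtain ⟨u, rfl⟩ := cyl_inter hc hcs hl
          cases u with
          | nil => simp at hs'
          | cons i u => exact hts ⟨i, by simp⟩
  · refine ⟨infPt b, mem_univ _, ultra_le_nhds f _ ?_ ?_⟩
    · intro s hs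
      have := hb s.length
      rwa [(prefixFun_iff s b).1 hs] at this
    · intro s hs
      refine Filter.mem_of_superset (hb s.length) ?_
      intro c hc hcs
      apply hs
      have h1 : resSeq b s.length <+: s := cyl_inter hc hcs (by rw [resSeq_length])
      have h2 := h1.eq_of_length (by rw [resSeq_length])
      exact (prefixFun_iff s b).2 h2

lemma nnstar_split (c c' : NNStar) (h : c ≠ c') :
    (∃ s i j, i ≠ j ∧ c.1 ∈ NStar.cyl (s ++ [i]) ∧ c'.1 ∈ NStar.cyl (s ++ [j])) ∨
    (∃ s i, c = limNN s ∧ c'.1 ∈ NStar.cyl (s ++ [i])) ∨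
    (∃ s i, c' = limNN s ∧ c.1 ∈ NStar.cyl (s ++ [i])) := by
  have key : ∀ b t, (∃ s i j, i ≠ j ∧ (infPt b).1 ∈ NStar.cyl (s ++ [i]) ∧
      (limNN t).1 ∈ NStar.cyl (s ++ [j])) ∨ ∃ i, (infPt b).1 ∈ NStar.cyl (t ++ [i]) := by
    intro b t
    have hne : resSeq b (t.length + 1) ≠ t := by
      intro e
      have := congrArg List.length e
      simp [resSeq_length] at this
    rcases list_split _ _ hne with ⟨s, i, j, hij, h1, h2⟩ | ⟨i, hi⟩ | ⟨i, hi⟩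
    · exact Or.inl ⟨s, i, j, hij, (prefixFun_resSeq _ _).mono h1, h2⟩
    · have := hi.length_le
      simp [resSeq_length] at this
    · exact Or.inr ⟨i, (prefixFun_resSeq _ _).mono hi⟩
  obtain ⟨b, rfl⟩ | ⟨t, rfl⟩ := nnstar_cases c <;> obtain ⟨b', rfl⟩ | ⟨t', rfl⟩ := nnstar_cases c'
  · left
    have hex : ∃ n, resSeq b n ≠ resSeq b' n := by
      by_contra hcon
      push Not at hcon
      apply h
      congr 1
      apply eq_of_prefixFun
      intro n
      refine ⟨resSeq b n, (resSeq_length _ _).ge, prefixFun_resSeq _ _, ?_⟩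
      rw [hcon]
      exact prefixFun_resSeq _ _
    obtain ⟨n, hn⟩ := hex
    rcases list_split _ _ hn with ⟨s, i, j, hij, h1, h2⟩ | ⟨i, hi⟩ | ⟨i, hi⟩
    · exact ⟨s, i, j, hij, (prefixFun_resSeq _ _).mono h1, (prefixFun_resSeq _ _).mono h2⟩
    · have := hi.length_le
      simp [resSeq_length] at this
    · have := hi.length_le
      simp [resSeq_length] at this
  · rcases key b t' with h | ⟨i, hi⟩
    · exact Or.inl h
    · exact Or.inr (Or.inr ⟨t', i, rfl, hi⟩)
  · rcases key b' t with ⟨s, i, j, hij, h1, h2⟩ | ⟨i, hi⟩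
    · exact Or.inl ⟨s, j, i, hij.symm, h2, h1⟩
    · exact Or.inr (Or.inl ⟨t, i, rfl, hi⟩)
  · have hne : t ≠ t' := by rintro rfl; exact h rfl
    rcases list_split _ _ hne with ⟨s, i, j, hij, h1, h2⟩ | ⟨i, hi⟩ | ⟨i, hi⟩
    · exact Or.inl ⟨s, i, j, hij, h1, h2⟩
    · exact Or.inr (Or.inl ⟨t, i, rfl, hi⟩)
    · exact Or.inr (Or.inr ⟨t', i, rfl, hi⟩)

lemma cyl_cases {t : List ℕ} {c : NNStar} (h : c.1 ∈ NStar.cyl t) :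
    c = limNN t ∨ ∃ i, c.1 ∈ NStar.cyl (t ++ [i]) := by
  obtain ⟨b, rfl⟩ | ⟨s, rfl⟩ := nnstar_cases c
  · exact Or.inr ⟨b t.length, prefixFun_next h⟩
  · obtain ⟨u, rfl⟩ : t <+: s := h
    cases u with
    | nil => left; simp
    | cons i u => right; exact ⟨i, by change t ++ [i] <+: _; simp⟩

/-! ### The two one-step constructions -/

section
variable {X : Type*} [MetricSpace X]

/-- `s` is good for `φ` if the images of the children cylinders accumulate somewhere. -/
def GoodAt (φ : (ℕ → ℕ) → X) (s : List ℕ) (x : X) : Prop :=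
  ∀ (n : ℕ) (ε : ℝ), 0 < ε → ∃ i ≥ n, ∃ b ∈ bcyl (s ++ [i]), dist (φ b) x < ε

lemma closed_of_finset {α : Type*} (S : Finset α) (F : α → Set X) (hF : ∀ a ∈ S, IsClosed (F a)) :
    IsClosed (⋃ a ∈ S, F a) :=
  S.finite_toSet.isClosed_biUnion hF

lemma good_step {φ : (ℕ → ℕ) → X} (hφ : Continuous φ)
    (hnc : ∀ s x, ∃ b ∈ bcyl s, φ b ≠ x) {s : List ℕ} {x : X} (hg : GoodAt φ s x) :
    ∃ (n : ℕ → ℕ) (u : ℕ → List ℕ) (F : ℕ → Set X), Function.Injective n ∧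
      (∀ i, s ++ [n i] <+: u i) ∧ (∀ i, IsClosed (F i)) ∧ (∀ i, φ '' bcyl (u i) ⊆ F i) ∧
      (∀ i j, i ≠ j → Disjoint (F i) (F j)) ∧ (∀ i, x ∉ F i) ∧
      (∀ ε > 0, ∃ N, ∀ i ≥ N, F i ⊆ Metric.ball x ε) := by
  obtain ⟨f, hP, hr⟩ := exists_seq_of_forall_finset_exists
    (α := ℕ × ℕ × List ℕ × Set X)
    (fun a => s ++ [a.2.1] <+: a.2.2.1 ∧ IsClosed a.2.2.2 ∧ φ '' bcyl a.2.2.1 ⊆ a.2.2.2 ∧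
      x ∉ a.2.2.2 ∧ a.2.2.2 ⊆ Metric.ball x (1 / ((a.1 : ℝ) + 1)))
    (fun a a' => a.1 < a'.1 ∧ a.2.1 < a'.2.1 ∧ Disjoint a.2.2.2 a'.2.2.2) (by
      intro S hS
      set C : Set X := ⋃ a ∈ S, a.2.2.2 with hC
      have hCc : IsClosed C := closed_of_finset S _ fun a ha => (hS a ha).2.1
      have hxC : x ∉ C := by
        simp only [hC, mem_iUnion, not_exists]
        exact fun a ha => (hS a ha).2.2.2.1
      set N := S.sup (fun a => max a.1 a.2.1) + 1 with hN
      have hNa : ∀ a ∈ S, a.1 < N ∧ a.2.1 < N := by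
        intro a ha
        have := Finset.le_sup (f := fun a : ℕ × ℕ × List ℕ × Set X => max a.1 a.2.1) ha
        simp only [max_le_iff] at this
        omega
      have hO : Metric.ball x (1 / ((N : ℝ) + 1)) ∩ Cᶜ ∈ 𝓝 x :=
        Filter.inter_mem (Metric.ball_mem_nhds _ (by positivity)) (hCc.isOpen_compl.mem_nhds hxC)
      obtain ⟨ε, hε, hεO⟩ := Metric.mem_nhds_iff.1 hO
      obtain ⟨i, hiN, b, hb, hbx⟩ := hg N ε hε
      obtain ⟨v, hv, hbv, hvU⟩ := exists_ext_subset
        ((Metric.isOpen_ball (x := x) (ε := ε)).preimage hφ) hb hbx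
      obtain ⟨b', hb', hne⟩ := hnc v x
      have hG : IsOpen (Metric.ball x ε ∩ {x}ᶜ) :=
        Metric.isOpen_ball.inter isOpen_compl_singleton
      obtain ⟨ρ, hρ, hρG⟩ := Metric.nhds_basis_closedBall.mem_iff.1
        (hG.mem_nhds (x := φ b') ⟨hvU hb', hne⟩)
      obtain ⟨u, hu, hbu, huU⟩ := exists_ext_subset
        ((Metric.isOpen_ball (x := φ b') (ε := ρ)).preimage hφ) hb' (by simpa using hρ)
      refine ⟨(N, i, u, Metric.closedBall (φ b') ρ), ⟨hv.trans hu, Metric.isClosed_closedBall,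
        ?_, ?_, ?_⟩, ?_⟩
      · exact (image_subset_iff.2 huU).trans Metric.ball_subset_closedBall
      · exact fun h => (hρG h).2 rfl
      · exact fun y hy => (hεO (hρG hy).1).1
      · intro a ha
        refine ⟨(hNa a ha).1, (hNa a ha).2.trans_le hiN, ?_⟩
        rw [Set.disjoint_left]
        intro y hy hy'
        exact (hεO (hρG hy').1).2 (mem_biUnion (show a ∈ (S : Set _) from ha) hy))
  have m1 : StrictMono fun k => (f k).1 := fun a b h => (hr a b h).1
  have m2 : StrictMono fun k => (f k).2.1 := fun a b h => (hr a b h).2.1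
  refine ⟨fun k => (f k).2.1, fun k => (f k).2.2.1, fun k => (f k).2.2.2, m2.injective,
    fun i => (hP i).1, fun i => (hP i).2.1, fun i => (hP i).2.2.1, ?_, fun i => (hP i).2.2.2.1, ?_⟩
  · intro i j hij
    rcases lt_or_gt_of_ne hij with h | h
    · exact (hr _ _ h).2.2
    · exact (hr _ _ h).2.2.symm
  · intro ε hε
    obtain ⟨N, hN⟩ := exists_nat_one_div_lt hε
    refine ⟨N, fun i hi => (hP i).2.2.2.2.trans (Metric.ball_subset_ball ?_)⟩
    refine le_trans ?_ hN.le
    have : (N : ℝ) ≤ (f i).1 := by exact_mod_cast hi.trans (m1.le_apply)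
    gcongr

lemma bad_step {φ : (ℕ → ℕ) → X} (hφ : Continuous φ)
    {s : List ℕ} (hg : ∀ x, ¬ GoodAt φ s x) :
    ∃ (n : ℕ → ℕ) (u : ℕ → List ℕ) (F : ℕ → Set X), Function.Injective n ∧
      (∀ i, s ++ [n i] <+: u i) ∧ (∀ i, IsClosed (F i)) ∧ (∀ i, φ '' bcyl (u i) ⊆ F i) ∧
      (∀ i j, i ≠ j → Disjoint (F i) (F j)) := by
  simp only [GoodAt] at hg
  push Not at hg
  obtain ⟨f, hP, hr⟩ := exists_seq_of_forall_finset_exists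
    (α := (ℕ × ℕ) × List ℕ × Set X)
    (fun a => s ++ [a.1.1] <+: a.2.1 ∧ IsClosed a.2.2 ∧ φ '' bcyl a.2.1 ⊆ a.2.2 ∧
      ∀ i ≥ a.1.2, ∀ b ∈ bcyl (s ++ [i]), φ b ∉ a.2.2)
    (fun a a' => a.1.1 < a'.1.1 ∧ Disjoint a.2.2 a'.2.2) (by
      intro S hS
      set C : Set X := ⋃ a ∈ S, a.2.2 with hC
      have hCc : IsClosed C := closed_of_finset S _ fun a ha => (hS a ha).2.1
      set N := S.sup (fun a => max a.1.1 a.1.2) + 1 with hN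
      have hNa : ∀ a ∈ S, a.1.1 < N ∧ a.1.2 < N := by
        intro a ha
        have := Finset.le_sup (f := fun a : (ℕ × ℕ) × List ℕ × Set X => max a.1.1 a.1.2) ha
        simp only [max_le_iff] at this
        omega
      obtain ⟨b, hb⟩ := bcyl_nonempty (s ++ [N])
      have hbC : φ b ∉ C := by
        simp only [hC, mem_iUnion, not_exists]
        exact fun a ha => (hS a ha).2.2.2 N (hNa a ha).2.le b hb
      obtain ⟨M, ε, hε, hM⟩ := hg (φ b)
      have hO : Metric.ball (φ b) ε ∩ Cᶜ ∈ 𝓝 (φ b) :=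
        Filter.inter_mem (Metric.ball_mem_nhds _ hε) (hCc.isOpen_compl.mem_nhds hbC)
      obtain ⟨ρ, hρ, hρG⟩ := Metric.nhds_basis_closedBall.mem_iff.1 hO
      obtain ⟨u, hu, hbu, huU⟩ := exists_ext_subset
        ((Metric.isOpen_ball (x := φ b) (ε := ρ)).preimage hφ) hb (by simpa using hρ)
      refine ⟨((N, M), u, Metric.closedBall (φ b) ρ), ⟨hu, Metric.isClosed_closedBall,
        ?_, ?_⟩, ?_⟩
      · exact (image_subset_iff.2 huU).trans Metric.ball_subset_closedBall
      · intro i hi b' hb' hmem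
        exact absurd (hρG hmem).1 (not_lt.2 (hM i hi b' hb'))
      · intro a ha
        refine ⟨(hNa a ha).1, ?_⟩
        rw [Set.disjoint_left]
        intro y hy hy'
        exact (hρG hy').2 (mem_biUnion (show a ∈ (S : Set _) from ha) hy))
  have m2 : StrictMono fun k => (f k).1.1 := fun a b h => (hr a b h).1
  refine ⟨fun k => (f k).1.1, fun k => (f k).2.1, fun k => (f k).2.2, m2.injective,
    fun i => (hP i).1, fun i => (hP i).2.1, fun i => (hP i).2.2.1, ?_⟩
  intro i j hij
  rcases lt_or_gt_of_ne hij with h | h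
  · exact (hr _ _ h).2
  · exact (hr _ _ h).2.symm

lemma GoodAt.mem_closure {φ : (ℕ → ℕ) → X} {s : List ℕ} {x : X} (hg : GoodAt φ s x) :
    x ∈ closure (φ '' bcyl s) := by
  rw [Metric.mem_closure_iff]
  intro ε hε
  obtain ⟨i, -, b, hb, hd⟩ := hg 0 ε hε
  exact ⟨φ b, ⟨b, bcyl_mono (List.prefix_append _ _) hb, rfl⟩, by rwa [dist_comm]⟩

end

/-! ### The main cases -/

lemma const_case {X : Type*} {φ : (ℕ → ℕ) → X} {s : List ℕ} {x : X}
    (h : ∀ b ∈ bcyl s, φ b = x) :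
    ∃ π : List ℕ → List ℕ, MeetEmbedding π ∧ ∀ b, φ (limSeq π b) = x := by
  have hm : MeetEmbedding (treeMap s (fun s i => s ++ [i])) :=
    treeMap_meet (P := fun _ => True) (nx := fun _ i => i) trivial (fun _ _ _ => trivial)
      (fun _ _ _ _ h => h) (fun _ _ _ => List.prefix_rfl)
  exact ⟨_, hm, fun b => h _ (hm.prefixFun b 0)⟩

lemma good_case {X : Type*} [MetricSpace X] {φ : (ℕ → ℕ) → X} (hφ : Continuous φ)
    (hnc : ∀ s x, ∃ b ∈ bcyl s, φ b ≠ x)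
    (hd : ∀ s, ∃ t, s <+: t ∧ ∃ x, GoodAt φ t x) :
    ∃ π : List ℕ → List ℕ, MeetEmbedding π ∧
      ∃ ψ : NNStar → X, Function.Injective ψ ∧ Continuous ψ ∧ IsClosedMap ψ ∧
          ∀ b, ψ (infPt b) = φ (limSeq π b) := by
  have : Nonempty X := ⟨φ 0⟩
  have key : ∀ s, (∃ x, GoodAt φ s x) → ∃ (x : X) (n : ℕ → ℕ) (u : ℕ → List ℕ) (F : ℕ → Set X),
      GoodAt φ s x ∧ Function.Injective n ∧
      (∀ i, s ++ [n i] <+: u i) ∧ (∀ i, IsClosed (F i)) ∧ (∀ i, φ '' bcyl (u i) ⊆ F i) ∧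
      (∀ i j, i ≠ j → Disjoint (F i) (F j)) ∧ (∀ i, x ∉ F i) ∧
      (∀ ε > 0, ∃ N, ∀ i ≥ N, F i ⊆ Metric.ball x ε) ∧ (∀ i, ∃ x, GoodAt φ (u i) x) := by
    rintro s ⟨x, hx⟩
    obtain ⟨n, u, F, h1, h2, h3, h4, h5, h6, h7⟩ := good_step hφ hnc hx
    choose g hg hg' using hd
    exact ⟨x, n, fun i => g (u i), F, hx, h1, fun i => (h2 i).trans (hg _), h3,
      fun i => (image_mono (bcyl_mono (hg _))).trans (h4 i), h5, h6, h7, fun i => hg' _⟩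
  choose! x nx u F hgood hinj hpre hcl himg hdis hxF hconv hP using key
  obtain ⟨root, -, hroot⟩ := hd []
  have hm : MeetEmbedding (treeMap root u) := treeMap_meet hroot hP hinj hpre
  have hPt := treeMap_good hroot hP
  have hsn := treeMap_snoc root u
  set π := treeMap root u with hπ
  let ψ' : NStar → X := fun c => match c with
    | .fin t => x (π t)
    | .lim t => x (π t)
    | .inf b => φ (limSeq π b)
  let ψ : NNStar → X := fun c => ψ' c.1
  have hψl : ∀ t, ψ (limNN t) = x (π t) := fun t => rfl
  have hψi : ∀ b, ψ (infPt b) = φ (limSeq π b) := fun t => rfl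
  have hcyl : ∀ (c : NNStar) t, c.1 ∈ NStar.cyl t → ψ c ∈ closure (φ '' bcyl (π t)) := by
    intro c t hc
    obtain ⟨b, rfl⟩ | ⟨s, rfl⟩ := nnstar_cases c
    · exact subset_closure ⟨_, hm.prefixFun' hc, rfl⟩
    · rw [hψl]
      exact closure_mono (image_mono (bcyl_mono (hm.mono hc))) (hgood _ (hPt s)).mem_closure
  have hF : ∀ (c : NNStar) t i, c.1 ∈ NStar.cyl (t ++ [i]) → ψ c ∈ F (π t) i := by
    intro c t i hc
    have h1 := hcyl c _ hc
    rw [hsn] at h1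
    exact closure_minimal (himg _ (hPt t) i) (hcl _ (hPt t) i) h1
  have hcont : Continuous ψ := by
    rw [continuous_iff_continuousAt]
    intro c
    rw [ContinuousAt, Metric.nhds_basis_closedBall.tendsto_right_iff]
    intro ε hε
    obtain ⟨b, rfl⟩ | ⟨t, rfl⟩ := nnstar_cases c
    · obtain ⟨n, hn⟩ := exists_resSeq_subset
        (hφ.continuousAt.preimage_mem_nhds (Metric.closedBall_mem_nhds (φ (limSeq π b)) hε))
      have hsub : bcyl (π (resSeq b n)) ⊆ bcyl (resSeq (limSeq π b) n) := by
        apply bcyl_mono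
        refine PrefixFun.isPre (prefixFun_resSeq _ _) (hm.prefixFun b n) ?_
        have := hm.length_le (resSeq b n)
        rwa [resSeq_length] at this ⊢
      have hnb : (Subtype.val ⁻¹' NStar.cyl (resSeq b n) : Set NNStar) ∈ 𝓝 (infPt b) :=
        ((isOpen_cyl _).preimage continuous_subtype_val).mem_nhds (prefixFun_resSeq b n)
      filter_upwards [hnb] with c hc
      exact closure_minimal (image_subset_iff.2 (hsub.trans hn)) Metric.isClosed_closedBall
        (hcyl c _ hc)
    · obtain ⟨N, hN⟩ := hconv _ (hPt t) ε hε
      have h1 : (Subtype.val ⁻¹' NStar.cyl t : Set NNStar) ∈ 𝓝 (limNN t) :=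
        ((isOpen_cyl _).preimage continuous_subtype_val).mem_nhds List.prefix_rfl
      have h2 : (⋂ i ∈ Iio N, Subtype.val ⁻¹' (NStar.cyl (t ++ [i]))ᶜ : Set NNStar)
          ∈ 𝓝 (limNN t) := by
        refine (Filter.biInter_mem (finite_Iio N)).2 fun i _ => ?_
        refine ((isOpen_cyl_compl _).preimage continuous_subtype_val).mem_nhds ?_
        intro (h : t ++ [i] <+: t)
        have := h.length_le
        simp at this
      filter_upwards [h1, h2] with c hc hc'
      rcases cyl_cases hc with rfl | ⟨i, hi⟩
      · exact Metric.mem_closedBall_self hε.le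
      · have hiN : N ≤ i := by
          by_contra hlt
          exact (mem_iInter₂.1 hc' i (not_le.1 hlt)) hi
        exact Metric.ball_subset_closedBall (hN i hiN (hF c t i hi))
  refine ⟨π, hm, ψ, ?_, hcont, hcont.isClosedMap, hψi⟩
  intro c c' h
  by_contra hne
  rcases nnstar_split c c' hne with ⟨s, i, j, hij, h1, h2⟩ | ⟨s, i, rfl, hi⟩ | ⟨s, i, rfl, hi⟩
  · have h1 := hF _ _ _ h1
    rw [h] at h1
    exact Set.disjoint_left.1 (hdis _ (hPt s) i j hij) h1 (hF _ _ _ h2)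
  · have := hF _ _ _ hi
    rw [← h, hψl] at this
    exact hxF _ (hPt s) i this
  · have := hF _ _ _ hi
    rw [h, hψl] at this
    exact hxF _ (hPt s) i this

lemma bad_case {X : Type*} [MetricSpace X] {φ : (ℕ → ℕ) → X} (hφ : Continuous φ)
    {root : List ℕ} (hd : ∀ t, root <+: t → ∀ x, ¬ GoodAt φ t x) :
    ∃ π : List ℕ → List ℕ, MeetEmbedding π ∧
      Function.Injective (φ ∘ limSeq π) ∧ Continuous (φ ∘ limSeq π) ∧
      IsClosedMap (φ ∘ limSeq π) := by
  have key : ∀ s, root <+: s → ∃ (n : ℕ → ℕ) (u : ℕ → List ℕ) (F : ℕ → Set X),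
      Function.Injective n ∧
      (∀ i, s ++ [n i] <+: u i) ∧ (∀ i, IsClosed (F i)) ∧ (∀ i, φ '' bcyl (u i) ⊆ F i) ∧
      (∀ i j, i ≠ j → Disjoint (F i) (F j)) := fun s hs => bad_step hφ (hd s hs)
  choose! nx u F hinj hpre hcl himg hdis using key
  have hP : ∀ s, root <+: s → ∀ i, root <+: u s i := fun s hs i =>
    (hs.trans (List.prefix_append _ _)).trans (hpre s hs i)
  have hm : MeetEmbedding (treeMap root u) := treeMap_meet (P := fun s => root <+: s)
    List.prefix_rfl hP hinj hpre
  have hPt := treeMap_good (P := fun s => root <+: s) List.prefix_rfl hP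
  have hsn := treeMap_snoc root u
  set π := treeMap root u with hπ
  have hcont : Continuous (φ ∘ limSeq π) := hφ.comp (continuous_limSeq π)
  refine ⟨π, hm, ?_, hcont, ?_⟩
  · intro b b' h
    by_contra hne
    have hF : ∀ (b : ℕ → ℕ) t i, PrefixFun (t ++ [i]) b → φ (limSeq π b) ∈ F (π t) i := by
      intro b t i hb
      apply himg _ (hPt t) i
      rw [← hsn]
      exact ⟨_, hm.prefixFun' hb, rfl⟩
    have hne' : infPt b ≠ infPt b' := by
      intro e
      apply hne
      have := congrArg Subtype.val e
      exact NStar.inf.inj this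
    rcases nnstar_split _ _ hne' with ⟨s, i, j, hij, h1, h2⟩ | ⟨s, i, e, hi⟩ | ⟨s, i, e, hi⟩
    · have h1 := hF _ _ _ h1
      have h2 := hF _ _ _ h2
      have h' : φ (limSeq π b) = φ (limSeq π b') := h
      rw [h'] at h1
      exact Set.disjoint_left.1 (hdis _ (hPt s) i j hij) h1 h2
    · exact NStar.noConfusion (congrArg Subtype.val e)
    · exact NStar.noConfusion (congrArg Subtype.val e)
  · intro A hA
    rw [isClosed_iff_ultrafilter]
    intro y v hv hAv
    set f := Ultrafilter.ofComapInfPrincipal hAv with hf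
    have hAf : A ∈ f := Ultrafilter.ofComapInfPrincipal_mem hAv
    have hmap : Filter.Tendsto (φ ∘ limSeq π) f (𝓝 y) := by
      have := Ultrafilter.ofComapInfPrincipal_eq_of_map hAv
      rw [← hf] at this
      rw [← this] at hv
      exact hv
    have h0 : bcyl [] ∈ f := by
      refine Filter.mem_of_superset hAf fun b _ i hi => ?_
      simp at hi
    rcases ultra_dichotomy f bcyl h0 with ⟨t, ht, hti⟩ | ⟨b, hb⟩
    · exfalso
      apply hd (π t) (hPt t) y
      intro n ε hε
      have hfin : {i | nx (π t) i < n}.Finite :=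
        (finite_lt_nat n).preimage (hinj _ (hPt t)).injOn
      have h2 : (⋂ i ∈ {i | nx (π t) i < n}, (bcyl (t ++ [i]))ᶜ) ∈ (f : Filter (ℕ → ℕ)) :=
        (Filter.biInter_mem hfin).2 fun i _ => Ultrafilter.compl_mem_iff_notMem.2 (hti i)
      have h3 := hmap (Metric.ball_mem_nhds y hε)
      obtain ⟨b, ⟨hb1, hb2⟩, hb3⟩ := f.nonempty_of_mem
        (Filter.inter_mem (Filter.inter_mem ht h2) h3)
      have hb4 := prefixFun_next hb1
      refine ⟨nx (π t) (b t.length), ?_, limSeq π b, ?_, hb3⟩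
      · by_contra hlt
        exact mem_iInter₂.1 hb2 (b t.length) (not_le.1 hlt) hb4
      · have := hm.prefixFun' hb4
        rw [hsn] at this
        exact this.mono (hpre _ (hPt t) _)
    · have hfb : (f : Filter (ℕ → ℕ)) ≤ 𝓝 b := by
        intro U hU
        obtain ⟨n, hn⟩ := exists_resSeq_subset hU
        exact Filter.mem_of_superset (hb n) hn
      have hbA : b ∈ A := isClosed_iff_ultrafilter.1 hA b f hfb hAf
      have h4 := (hcont.tendsto b).mono_left hfb
      exact ⟨b, hbA, tendsto_nhds_unique h4 hmap⟩

lemma continuous_reduction {X : Type*} [MetricSpace X] [SeparableSpace X]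
    (φ : (ℕ → ℕ) → X) (h : BaireMeasurableFun φ) :
    ∃ π : List ℕ → List ℕ, MeetEmbedding π ∧ Continuous (φ ∘ limSeq π) := by
  have : SecondCountableTopology X := UniformSpace.secondCountable_of_separable X
  obtain ⟨B, hBc, -, hB⟩ := TopologicalSpace.exists_countable_basis X
  have h' : ∀ V ∈ B, ∃ U : Set (ℕ → ℕ), IsOpen U ∧ IsMeagre (symmDiff (φ ⁻¹' V) U) :=
    fun V hV => h V (hB.isOpen hV)
  choose! U hUo hUm using h'
  have hres : (⋃ V ∈ B, symmDiff (φ ⁻¹' V) (U V))ᶜ ∈ residual (ℕ → ℕ) := isMeagre_biUnion hBc hUm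
  obtain ⟨C, hC, hCG, hCd⟩ := mem_residual.1 hres
  have hcont : ContinuousOn φ C := by
    rw [hB.continuousOn_iff]
    intro V hV
    refine ⟨U V, hUo V hV, ?_⟩
    ext b
    simp only [mem_inter_iff, and_congr_left_iff]
    intro hb
    have := hC hb
    simp only [mem_compl_iff, mem_iUnion, not_exists] at this
    have := this V hV
    rw [Set.mem_symmDiff] at this
    tauto
  obtain ⟨W, hWo, rfl⟩ := hCG.eq_iInter_nat
  have hWd : ∀ n, Dense (W n) := fun n => hCd.mono (iInter_subset _ _)
  have key : ∀ (s : List ℕ) (i : ℕ), ∃ u, s ++ [i] <+: u ∧ ∀ j ≤ s.length, bcyl u ⊆ W j := by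
    intro s i
    have hd : Dense (⋂ j ∈ Iic s.length, W j) :=
      dense_biInter_of_isOpen (fun j _ => hWo j) (to_countable _) (fun j _ => hWd j)
    have ho : IsOpen (⋂ j ∈ Iic s.length, W j) :=
      (finite_Iic _).isOpen_biInter fun j _ => hWo j
    obtain ⟨b, hb, hb'⟩ := hd.inter_open_nonempty _ (isOpen_bcyl (s ++ [i])) (bcyl_nonempty _)
    obtain ⟨u, hu, -, hu'⟩ := exists_ext_subset ho hb hb'
    exact ⟨u, hu, fun j hj c hc => mem_iInter₂.1 (hu' hc) j hj⟩
  choose u hu hu' using key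
  have hm : MeetEmbedding (treeMap [] u) :=
    treeMap_meet (P := fun _ => True) (nx := fun _ i => i) trivial (fun _ _ _ => trivial)
      (fun _ _ _ _ h => h) (fun s _ i => hu s i)
  refine ⟨_, hm, hcont.comp_continuous (continuous_limSeq _) fun b => ?_⟩
  rw [mem_iInter]
  intro n
  have h1 := hm.prefixFun b (n + 1)
  rw [resSeq_succ, treeMap_snoc] at h1
  refine hu' _ _ n ?_ h1
  have := hm.length_le (resSeq b n)
  rwa [resSeq_length] at this

/-- stabilization of Baire measurable functions on Baire space. -/
theorem stmt_12 {X : Type*} [MetricSpace X] [SeparableSpace X]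
    (φ : (ℕ → ℕ) → X) (h : BaireMeasurableFun φ) :
    ∃ π : List ℕ → List ℕ, MeetEmbedding π ∧
      ((∃ x, ∀ b, (φ ∘ limSeq π) b = x) ∨
        (Function.Injective (φ ∘ limSeq π) ∧ Continuous (φ ∘ limSeq π) ∧
          IsClosedMap (φ ∘ limSeq π)) ∨
        (∃ ψ : NNStar → X, Function.Injective ψ ∧ Continuous ψ ∧ IsClosedMap ψ ∧
          ∀ b, ψ (infPt b) = (φ ∘ limSeq π) b)) := by
  obtain ⟨π₀, hπ₀, hcont⟩ := continuous_reduction φ h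
  have hcomp : ∀ {π}, MeetEmbedding π → φ ∘ limSeq (π₀ ∘ π) = (φ ∘ limSeq π₀) ∘ limSeq π := by
    intro π hπ
    funext b
    simp [limSeq_comp hπ₀ hπ]
  by_cases hc : ∃ s x, ∀ b ∈ bcyl s, (φ ∘ limSeq π₀) b = x
  · obtain ⟨s, x, hs⟩ := hc
    obtain ⟨π, hπ, hx⟩ := const_case hs
    refine ⟨π₀ ∘ π, hπ₀.comp hπ, Or.inl ⟨x, ?_⟩⟩
    rw [hcomp hπ]
    exact hx
  push Not at hc
  by_cases hd : ∀ s, ∃ t, s <+: t ∧ ∃ x, GoodAt (φ ∘ limSeq π₀) t x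
  · obtain ⟨π, hπ, hx⟩ := good_case hcont hc hd
    refine ⟨π₀ ∘ π, hπ₀.comp hπ, Or.inr (Or.inr ?_)⟩
    rw [hcomp hπ]
    exact hx
  · push Not at hd
    obtain ⟨root, hroot⟩ := hd
    obtain ⟨π, hπ, hx⟩ := bad_case hcont hroot
    refine ⟨π₀ ∘ π, hπ₀.comp hπ, Or.inr (Or.inl ?_)⟩
    rw [hcomp hπ]
    exact hx
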